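/- Under MAR for both periods (Y_t ⊥ R_t | X, A and γ_t(X,a) = P(R_t=1 | X, A=a) ∈ (0,1) a.s. for t ∈ {0,1}), together with conditional parallel trends, consistency, and positivity, the ATT is identified as θ* = E[(A/E[A])·(E[Y1 | X, A=1, R1=1] - E[Y0 | X, A=1, R0=1] - E[Y1 | X, A=0, R1=1] + E[Y0 | X, A=0, R0=1])]. -/

import Mathlib

open MeasureTheory

/-- `m ∘ X` is a version of the conditional expectation `E[Y ∣ X]` restricted to the
event `E` (i.e. a version of `E[Y ∣ X, E]`). -/
def IsCondExpOn {Ω 𝒳 : Type*} [MeasurableSpace Ω] [MeasurableSpace 𝒳]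
    (μ : MeasureTheory.Measure Ω) (X : Ω → 𝒳) (E : Set Ω) (Y : Ω → ℝ) (m : 𝒳 → ℝ) : Prop :=
  Measurable m ∧ ∀ s : Set 𝒳, MeasurableSet s →
    ∫ ω in E ∩ X ⁻¹' s, Y ω ∂μ = ∫ ω in E ∩ X ⁻¹' s, m (X ω) ∂μ

theorem IsCondExpOn.ae_eq_condExp {Ω 𝒳 : Type*} [mΩ : MeasurableSpace Ω] [m𝒳 : MeasurableSpace 𝒳]
    {μ : Measure Ω} [IsFiniteMeasure μ] {X : Ω → 𝒳} (hX : Measurable X) {E : Set Ω}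
    {Y : Ω → ℝ} {m : 𝒳 → ℝ} (hY : IntegrableOn Y E μ)
    (h : IsCondExpOn μ X E Y m) :
    (fun ω => m (X ω)) =ᵐ[μ.restrict E] (μ.restrict E)[Y | m𝒳.comap X] := by
  obtain ⟨hm, hs⟩ := h
  have hle : m𝒳.comap X ≤ mΩ := hX.comap_le
  have hXm : Measurable[m𝒳.comap X] X := comap_measurable X
  have hres : ∀ s, MeasurableSet s → (μ.restrict E).restrict (X ⁻¹' s) = μ.restrict (E ∩ X ⁻¹' s) := by
    intro s hs'
    rw [Measure.restrict_restrict (hX hs'), Set.inter_comm]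
  have key : ∀ n : ℕ, ∀ᵐ ω ∂(μ.restrict E), |m (X ω)| ≤ n →
      m (X ω) = ((μ.restrict E)[Y | m𝒳.comap X]) ω := by
    intro n
    set t : Set 𝒳 := {x | |m x| ≤ n} with ht
    have htm : MeasurableSet t := measurableSet_le (by fun_prop) measurable_const
    have htX : MeasurableSet[m𝒳.comap X] (X ⁻¹' t) := hXm htm
    have hmeas : Measurable[m𝒳.comap X] (fun ω => t.indicator m (X ω)) :=
      (hm.indicator htm).comp hXm
    have hint : Integrable (fun ω => t.indicator m (X ω)) (μ.restrict E) := by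
      refine Integrable.of_bound (C := n) (hmeas.mono hle le_rfl).aestronglyMeasurable ?_
      refine Filter.Eventually.of_forall fun ω => ?_
      by_cases hω : X ω ∈ t
      · rw [Set.indicator_of_mem hω]; exact hω
      · rw [Set.indicator_of_notMem hω]; simp
    have h1 : (fun ω => t.indicator m (X ω)) =ᵐ[μ.restrict E]
        (μ.restrict E)[(X ⁻¹' t).indicator Y | m𝒳.comap X] := by
      refine ae_eq_condExp_of_forall_setIntegral_eq hle (hY.integrable.indicator (hle _ htX))
        (fun s _ _ => hint.integrableOn) ?_ hmeas.stronglyMeasurable.aestronglyMeasurable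
      rintro _ ⟨s, hs', rfl⟩ -
      have e : (fun ω => t.indicator m (X ω)) = (X ⁻¹' t).indicator (fun ω => m (X ω)) := by
        ext ω; rfl
      rw [e, setIntegral_indicator (hX htm), setIntegral_indicator (hX htm), ← Set.preimage_inter,
        hres _ (hs'.inter htm), hs _ (hs'.inter htm)]
    have h2 := condExp_indicator (m := m𝒳.comap X) hY.integrable htX
    filter_upwards [h1, h2] with ω a b hω
    have hωt : ω ∈ X ⁻¹' t := hω
    rw [b, Set.indicator_of_mem hωt] at a
    rw [← a]
    exact (Set.indicator_of_mem (s := t) hωt m).symm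
  rw [← ae_all_iff] at key
  filter_upwards [key] with ω hω
  obtain ⟨n, hn⟩ := exists_nat_ge |m (X ω)|
  exact hω n hn

theorem IsCondExpOn.integrableOn {Ω 𝒳 : Type*} [mΩ : MeasurableSpace Ω] [m𝒳 : MeasurableSpace 𝒳]
    {μ : Measure Ω} [IsFiniteMeasure μ] {X : Ω → 𝒳} (hX : Measurable X) {E : Set Ω}
    {Y : Ω → ℝ} {m : 𝒳 → ℝ} (hY : IntegrableOn Y E μ)
    (h : IsCondExpOn μ X E Y m) : IntegrableOn (fun ω => m (X ω)) E μ :=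
  (integrable_condExp (m := m𝒳.comap X)).congr (h.ae_eq_condExp hX hY).symm

theorem complete_case_eq {Ω 𝒳 : Type*} [mΩ : MeasurableSpace Ω] [m𝒳 : MeasurableSpace 𝒳]
    {μ : Measure Ω} [IsFiniteMeasure μ] {X : Ω → 𝒳} (hX : Measurable X) {E : Set Ω}
    {Y R : Ω → ℝ} {m mf γ : 𝒳 → ℝ} (hY : IntegrableOn Y E μ) (hR : Measurable R)
    (hRbin : ∀ ω, R ω = 0 ∨ R ω = 1)
    (hγ : IsCondExpOn μ X E R γ) (hpos : ∀ᵐ ω ∂μ, 0 < γ (X ω) ∧ γ (X ω) < 1)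
    (hCI : IsCondExpOn μ X E (fun ω => Y ω * R ω) (fun x => mf x * γ x))
    (hm : IsCondExpOn μ X (E ∩ {ω | R ω = 1}) Y m) :
    (fun ω => m (X ω)) =ᵐ[μ.restrict E] (fun ω => mf (X ω)) := by
  have hle : m𝒳.comap X ≤ mΩ := hX.comap_le
  have hXm : Measurable[m𝒳.comap X] X := comap_measurable X
  have hRs : MeasurableSet {ω | R ω = 1} := hR (measurableSet_singleton 1)
  have hmulR : ∀ f : Ω → ℝ, (fun ω => f ω * R ω) = {ω | R ω = 1}.indicator f := by
    intro f; ext ω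
    rcases hRbin ω with h | h <;> simp [Set.indicator, h]
  have hRint : IntegrableOn R E μ := by
    refine Integrable.of_bound (C := 1) hR.aestronglyMeasurable ?_
    refine Filter.Eventually.of_forall fun ω => ?_
    rcases hRbin ω with h | h <;> simp [h]
  have hYR : IntegrableOn (fun ω => Y ω * R ω) E μ := by
    rw [hmulR]; exact hY.integrable.indicator hRs
  have hmint := hm.integrableOn hX (hY.mono_set Set.inter_subset_left)
  have hmR : Integrable (fun ω => m (X ω) * R ω) (μ.restrict E) := by
    rw [hmulR, integrable_indicator_iff hRs, IntegrableOn, Measure.restrict_restrict hRs,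
      Set.inter_comm]
    exact hmint
  have a1 := hγ.ae_eq_condExp hX hRint
  have a2 := hCI.ae_eq_condExp hX hYR
  have hmX : StronglyMeasurable[m𝒳.comap X] (fun ω => m (X ω)) :=
    (hm.1.comp hXm).stronglyMeasurable
  have a3 := condExp_mul_of_stronglyMeasurable_left hmX hmR hRint
  have a4 : (μ.restrict E)[fun ω => m (X ω) * R ω | m𝒳.comap X] =ᵐ[μ.restrict E]
      (μ.restrict E)[fun ω => Y ω * R ω | m𝒳.comap X] := by
    refine ae_eq_condExp_of_forall_setIntegral_eq hle hYR
        (fun s _ _ => integrable_condExp.integrableOn) ?_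
        stronglyMeasurable_condExp.aestronglyMeasurable
    rintro _ ⟨s, hs', rfl⟩ -
    rw [setIntegral_condExp hle hmR (hXm hs'), hmulR, hmulR, setIntegral_indicator hRs,
      setIntegral_indicator hRs, Measure.restrict_restrict ((hX hs').inter hRs)]
    have e : X ⁻¹' s ∩ {ω | R ω = 1} ∩ E = E ∩ {ω | R ω = 1} ∩ X ⁻¹' s := by
      ext; simp; tauto
    rw [e, hm.2 s hs']
  filter_upwards [a1, a2, a3, a4, ae_restrict_of_ae hpos] with ω b1 b2 b3 b4 hp
  have b5 : mf (X ω) * γ (X ω) = m (X ω) * γ (X ω) := by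
    rw [b2, b1, ← b4]
    exact b3
  exact (mul_right_cancel₀ hp.1.ne' b5).symm

/-- **Identification of the ATT with MAR outcomes in both periods.** Under
conditional parallel trends, consistency, positivity, and MAR for both the pre-
and post-treatment outcomes (`Y_t ⊥ R_t ∣ (X, A)` and `P(R_t=1 ∣ X, A=a) ∈ (0,1)`
a.s. for `t ∈ {0,1}`), the ATT `θ* = E[Y1(1) - Y1(0) ∣ A = 1]` equals
`E[(A/E[A])·(E[Y1∣X,A=1,R1=1] - E[Y0∣X,A=1,R0=1] - E[Y1∣X,A=0,R1=1] + E[Y0∣X,A=0,R0=1])]`. -/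
theorem att_identification_MAR_both_periods
    {Ω 𝒳 : Type*} [MeasurableSpace Ω] [MeasurableSpace 𝒳]
    (μ : Measure Ω) [IsProbabilityMeasure μ]
    (X : Ω → 𝒳) (A R0 R1 Y0 Y10 Y11 Y1 : Ω → ℝ)
    (hX : Measurable X) (hA : Measurable A) (hR0 : Measurable R0) (hR1 : Measurable R1)
    (hY0 : Measurable Y0) (hY10 : Measurable Y10) (hY11 : Measurable Y11)
    (hAbin : ∀ ω, A ω = 0 ∨ A ω = 1)
    (hR0bin : ∀ ω, R0 ω = 0 ∨ R0 ω = 1) (hR1bin : ∀ ω, R1 ω = 0 ∨ R1 ω = 1)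
    (hY0int : Integrable Y0 μ) (hY10int : Integrable Y10 μ) (hY11int : Integrable Y11 μ)
    -- consistency
    (hcons : ∀ ω, Y1 ω = A ω * Y11 ω + (1 - A ω) * Y10 ω)
    -- positivity
    (π : 𝒳 → ℝ)
    (hπ : IsCondExpOn μ X Set.univ A π)
    (hA1pos : 0 < μ {ω | A ω = 1})
    (hπ01 : ∀ᵐ ω ∂μ, 0 < π (X ω) ∧ π (X ω) < 1)
    -- conditional parallel trends, via a common version mPT
    (mPT : 𝒳 → ℝ)
    (hPT1 : IsCondExpOn μ X {ω | A ω = 1} (fun ω => Y10 ω - Y0 ω) mPT)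
    (hPT0 : IsCondExpOn μ X {ω | A ω = 0} (fun ω => Y10 ω - Y0 ω) mPT)
    -- MAR for the pre-treatment outcome: γ0a versions of P(R0=1 ∣ X, A=a),
    -- weak overlap, and Y0 ⊥ R0 ∣ (X, A) via the conditional product rule
    (γ01 γ00 mf01 mf00 : 𝒳 → ℝ)
    (hγ01 : IsCondExpOn μ X {ω | A ω = 1} R0 γ01)
    (hγ00 : IsCondExpOn μ X {ω | A ω = 0} R0 γ00)
    (hγ01ol : ∀ᵐ ω ∂μ, 0 < γ01 (X ω) ∧ γ01 (X ω) < 1)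
    (hγ00ol : ∀ᵐ ω ∂μ, 0 < γ00 (X ω) ∧ γ00 (X ω) < 1)
    (hmf01 : IsCondExpOn μ X {ω | A ω = 1} Y0 mf01)
    (hmf00 : IsCondExpOn μ X {ω | A ω = 0} Y0 mf00)
    (hCI01 : IsCondExpOn μ X {ω | A ω = 1} (fun ω => Y0 ω * R0 ω)
      (fun x => mf01 x * γ01 x))
    (hCI00 : IsCondExpOn μ X {ω | A ω = 0} (fun ω => Y0 ω * R0 ω)
      (fun x => mf00 x * γ00 x))
    -- MAR for the post-treatment outcome: γ1a versions of P(R1=1 ∣ X, A=a),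
    -- weak overlap, and Y1 ⊥ R1 ∣ (X, A) via the conditional product rule
    (γ11 γ10 mf11 mf10 : 𝒳 → ℝ)
    (hγ11 : IsCondExpOn μ X {ω | A ω = 1} R1 γ11)
    (hγ10 : IsCondExpOn μ X {ω | A ω = 0} R1 γ10)
    (hγ11ol : ∀ᵐ ω ∂μ, 0 < γ11 (X ω) ∧ γ11 (X ω) < 1)
    (hγ10ol : ∀ᵐ ω ∂μ, 0 < γ10 (X ω) ∧ γ10 (X ω) < 1)
    (hmf11 : IsCondExpOn μ X {ω | A ω = 1} Y1 mf11)
    (hmf10 : IsCondExpOn μ X {ω | A ω = 0} Y1 mf10)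
    (hCI11 : IsCondExpOn μ X {ω | A ω = 1} (fun ω => Y1 ω * R1 ω)
      (fun x => mf11 x * γ11 x))
    (hCI10 : IsCondExpOn μ X {ω | A ω = 0} (fun ω => Y1 ω * R1 ω)
      (fun x => mf10 x * γ10 x))
    -- observed-data (complete-case) regression functions
    (m11 m10 m01 m00 : 𝒳 → ℝ)
    (hm11 : IsCondExpOn μ X ({ω | A ω = 1} ∩ {ω | R1 ω = 1}) Y1 m11)
    (hm10 : IsCondExpOn μ X ({ω | A ω = 0} ∩ {ω | R1 ω = 1}) Y1 m10)
    (hm01 : IsCondExpOn μ X ({ω | A ω = 1} ∩ {ω | R0 ω = 1}) Y0 m01)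
    (hm00 : IsCondExpOn μ X ({ω | A ω = 0} ∩ {ω | R0 ω = 1}) Y0 m00)
    (hint : Integrable (fun ω =>
      A ω * (m11 (X ω) - m01 (X ω) - m10 (X ω) + m00 (X ω))) μ) :
    (∫ ω in {ω | A ω = 1}, (Y11 ω - Y10 ω) ∂μ) / (μ {ω | A ω = 1}).toReal
      = ∫ ω, A ω / (∫ ω', A ω' ∂μ)
          * (m11 (X ω) - m01 (X ω) - m10 (X ω) + m00 (X ω)) ∂μ := by
  have hE1 : MeasurableSet {ω | A ω = 1} := hA (measurableSet_singleton 1)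
  have hE0 : MeasurableSet {ω | A ω = 0} := hA (measurableSet_singleton 0)
  have hAind : A = {ω | A ω = 1}.indicator (fun _ => (1 : ℝ)) := by
    ext ω
    rcases hAbin ω with h | h <;> simp [Set.indicator, h]
  have hAint : Integrable A μ := by
    rw [hAind]; exact (integrable_const 1).indicator hE1
  have hY1e1 : ∀ ω ∈ {ω | A ω = 1}, Y1 ω = Y11 ω := by
    intro ω h
    have h' : A ω = 1 := h
    rw [hcons, h']; ring
  have hY1e0 : ∀ ω ∈ {ω | A ω = 0}, Y1 ω = Y10 ω := by
    intro ω h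
    have h' : A ω = 0 := h
    rw [hcons, h']; ring
  have hY1i1 : IntegrableOn Y1 {ω | A ω = 1} μ :=
    hY11int.integrableOn.congr_fun (fun ω h => (hY1e1 ω h).symm) hE1
  have hY1i0 : IntegrableOn Y1 {ω | A ω = 0} μ :=
    hY10int.integrableOn.congr_fun (fun ω h => (hY1e0 ω h).symm) hE0
  have c11 := complete_case_eq hX hY1i1 hR1 hR1bin hγ11 hγ11ol hCI11 hm11
  have c10 := complete_case_eq hX hY1i0 hR1 hR1bin hγ10 hγ10ol hCI10 hm10
  have c01 := complete_case_eq hX hY0int.integrableOn hR0 hR0bin hγ01 hγ01ol hCI01 hm01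
  have c00 := complete_case_eq hX hY0int.integrableOn hR0 hR0bin hγ00 hγ00ol hCI00 hm00
  have d10 := hmf10.ae_eq_condExp hX hY1i0
  have d00 := hmf00.ae_eq_condExp hX hY0int.integrableOn
  have dPT := hPT0.ae_eq_condExp hX (hY10int.sub hY0int).integrableOn
  have hsub : (μ.restrict {ω | A ω = 0})[fun ω => Y10 ω - Y0 ω | MeasurableSpace.comap X inferInstance]
      =ᵐ[μ.restrict {ω | A ω = 0}]
      (μ.restrict {ω | A ω = 0})[Y1 | MeasurableSpace.comap X inferInstance]
        - (μ.restrict {ω | A ω = 0})[Y0 | MeasurableSpace.comap X inferInstance] := by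
    refine Filter.EventuallyEq.trans ?_ (condExp_sub hY1i0.integrable hY0int.integrableOn.integrable _)
    refine condExp_congr_ae ?_
    filter_upwards [ae_restrict_mem hE0] with ω h
    simp [hY1e0 ω h]
  have hPTae0 : ∀ᵐ ω ∂(μ.restrict {ω | A ω = 0}), m10 (X ω) - m00 (X ω) = mPT (X ω) := by
    filter_upwards [c10, c00, d10, d00, dPT, hsub] with ω a b c d e f
    rw [a, b, c, d, e]; exact f.symm
  -- transfer to the whole space by positivity
  have hPTae : ∀ᵐ ω ∂μ, m10 (X ω) - m00 (X ω) = mPT (X ω) := by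
    set s : Set 𝒳 := {x | m10 x - m00 x = mPT x}ᶜ with hs
    have hsm : MeasurableSet s :=
      (measurableSet_eq_fun (hm10.1.sub hm00.1) hPT1.1).compl
    have hπint : Integrable (fun ω => π (X ω)) μ := by
      simpa using hπ.integrableOn hX hAint.integrableOn
    have h0 : ∀ᵐ ω ∂μ, X ω ∈ s → 1 - A ω = 0 := by
      rw [ae_restrict_iff' hE0] at hPTae0
      filter_upwards [hPTae0] with ω h hω
      rcases hAbin ω with h' | h'
      · exact absurd (h h') hω
      · rw [h']; ring
    have h1 : ∫ ω in X ⁻¹' s, (1 - A ω) ∂μ = 0 :=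
      setIntegral_eq_zero_of_ae_eq_zero h0
    have h2 : ∫ ω in X ⁻¹' s, (1 - π (X ω)) ∂μ = 0 := by
      rw [← h1, integral_sub (integrable_const _) hπint.integrableOn,
        integral_sub (integrable_const _) hAint.integrableOn]
      have := hπ.2 s hsm
      rw [Set.univ_inter] at this
      rw [this]
    have hnn : 0 ≤ᵐ[μ.restrict (X ⁻¹' s)] fun ω => 1 - π (X ω) := by
      filter_upwards [ae_restrict_of_ae hπ01] with ω h
      simp only [Pi.zero_apply]
      linarith [h.2]
    rw [integral_eq_zero_iff_of_nonneg_ae hnn ((integrable_const _).sub hπint.integrableOn)] at h2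
    have h3 := (ae_restrict_iff' (hX hsm)).1 h2
    filter_upwards [h3, hπ01] with ω h hp
    by_contra hne
    have := h hne
    simp only [Pi.zero_apply] at this
    linarith [hp.2]
  have hEA : ∫ ω, A ω ∂μ = (μ {ω | A ω = 1}).toReal := by
    conv_lhs => rw [hAind]
    rw [integral_indicator hE1]
    simp [Measure.real]
  have i11 := hmf11.integrableOn hX hY1i1
  have i01 := hmf01.integrableOn hX hY0int.integrableOn
  have iPT := hPT1.integrableOn hX (hY10int.sub hY0int).integrableOn
  have e11 := hmf11.2 Set.univ MeasurableSet.univ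
  have e01 := hmf01.2 Set.univ MeasurableSet.univ
  have ePT := hPT1.2 Set.univ MeasurableSet.univ
  simp only [Set.preimage_univ, Set.inter_univ] at e11 e01 ePT
  have hmain : ∫ ω, A ω * (m11 (X ω) - m01 (X ω) - m10 (X ω) + m00 (X ω)) ∂μ
      = ∫ ω in {ω | A ω = 1}, (Y11 ω - Y10 ω) ∂μ := by
    have t1 : ∫ ω, A ω * (m11 (X ω) - m01 (X ω) - m10 (X ω) + m00 (X ω)) ∂μ
        = ∫ ω in {ω | A ω = 1}, (m11 (X ω) - m01 (X ω) - m10 (X ω) + m00 (X ω)) ∂μ := by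
      rw [← integral_indicator hE1]
      refine integral_congr_ae (Filter.Eventually.of_forall fun ω => ?_)
      rcases hAbin ω with h | h <;> simp [Set.indicator, h]
    have t2 : ∫ ω in {ω | A ω = 1}, (m11 (X ω) - m01 (X ω) - m10 (X ω) + m00 (X ω)) ∂μ
        = ∫ ω in {ω | A ω = 1}, (mf11 (X ω) - mf01 (X ω) - mPT (X ω)) ∂μ := by
      refine integral_congr_ae ?_
      filter_upwards [c11, c01, ae_restrict_of_ae hPTae] with ω a b c
      rw [a, b, ← c]; ring
    have t3 : ∫ ω in {ω | A ω = 1}, Y1 ω ∂μ = ∫ ω in {ω | A ω = 1}, Y11 ω ∂μ :=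
      setIntegral_congr_fun hE1 hY1e1
    have i2 : Integrable (fun ω => mf11 (X ω) - mf01 (X ω)) (μ.restrict {ω | A ω = 1}) :=
      i11.integrable.sub i01.integrable
    rw [t1, t2, integral_sub i2 iPT,
      integral_sub i11 i01, ← e11, ← e01, ← ePT, t3,
      integral_sub hY10int.integrableOn hY0int.integrableOn,
      integral_sub hY11int.integrableOn hY10int.integrableOn]
    ring
  rw [← hmain, ← hEA, div_eq_inv_mul, ← integral_const_mul]
  refine integral_congr_ae (Filter.Eventually.of_forall fun ω => ?_)
  simp only
  rw [div_eq_inv_mul, mul_assoc]
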